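/- arXiv:math/0304229 — 2 statements merged into one kernel-verified Lean document; each statement's English description precedes it below -/
import Mathlib

section
/- The expected number of draws ⟨T⟩_2 to collect at least two copies of each of d coupon kinds equals d² ∫_0^∞ (t²/(e^t - 1 - t)) · (1 - (1+t)e^{-t})^d dt. -/
open MeasureTheory

/-- The probability that a collector of `d` coupon kinds, who stops on first having at
least two copies of every kind, stops at exactly trial `n`. -/
noncomputable def stopProb (d n : ℕ) : ℝ :=
  ((Nat.card {f : Fin n → Fin d //
      (∀ c : Fin d, 2 ≤ (Finset.univ.filter fun i : Fin n => f i = c).card) ∧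
      ¬ (∀ c : Fin d,
          2 ≤ (Finset.univ.filter fun i : Fin n => (i : ℕ) < n - 1 ∧ f i = c).card)} : ℕ) : ℝ)
    / (d : ℝ) ^ n

/-!
If the last draw, the `(m + 1)`-st, is of kind `c`, then the first `m` draws contain exactly one
copy of `c` and at least two of every other kind. The exponential generating function of such
sequences of `m` draws is `t * (exp t - 1 - t) ^ (d - 1)`, a product over the kinds. Integrating
it against `t * exp (-(d * t))` turns `t ^ m / m!` into `(m + 1) / d ^ (m + 2)`, which is the
stopping time `m + 1` times the probability `d ^ (-(m + 1))` of a given sequence of `m + 1` draws,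
up to a factor `d`; the sum over the `d` choices of `c` gives a second factor `d`. The argument
works for any number `s + 1` of copies.
-/

open scoped Nat Finset

section Enumeration

variable {α ι : Type*} [Fintype α] [DecidableEq ι]

/-- The number of copies of the kind `c` in the family `f` of draws. -/
def copies (f : α → ι) (c : ι) : ℕ := #{i | f i = c}

variable [Fintype ι]

theorem sum_copies (f : α → ι) : ∑ c, copies f c = Fintype.card α :=
  (Finset.card_eq_sum_card_fiberwise fun _ _ => Finset.mem_coe.2 (Finset.mem_univ _)).symm

theorem prod_pow_copies {M : Type*} [CommMonoid M] (x : ι → M) (f : α → ι) :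
    ∏ c, x c ^ copies f c = ∏ i, x (f i) := by
  simp only [copies, ← Finset.prod_const, Finset.prod_fiberwise']

/-- Both sides are a coefficient of `(∑ c, X c) ^ card α`. -/
theorem card_filter_copies_eq [DecidableEq α] (k : ι → ℕ) (hk : ∑ c, k c = Fintype.card α) :
    #{f : α → ι | copies f = k} = Nat.multinomial Finset.univ k := by
  let toFinsupp : (ι → ℕ) → ι →₀ ℕ := Finsupp.equivFunOnFinite.symm
  have prod_X (f : α → ι) : ∏ i, (MvPolynomial.X (f i) : MvPolynomial ι ℕ) =
      MvPolynomial.monomial (toFinsupp (copies f)) 1 := by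
    rw [← prod_pow_copies, MvPolynomial.monomial_eq, Finsupp.prod_fintype _ _ (by simp)]
    simp [toFinsupp]
  have expand : (∑ c, MvPolynomial.X c : MvPolynomial ι ℕ) ^ Fintype.card α =
      ∑ f : α → ι, MvPolynomial.monomial (toFinsupp (copies f)) 1 := by
    simp only [← prod_X, ← Fintype.piFinset_univ, ← Finset.prod_univ_sum, Finset.prod_const,
      Finset.card_univ]
  have coeff := MvPolynomial.coeff_sum_X_pow_of_fintype (R := ℕ) (toFinsupp k) (Fintype.card α)
  rw [expand, if_pos (by simpa [Finsupp.sum_fintype, toFinsupp] using hk),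
    Finsupp.multinomial_eq_of_support_subset (Finset.subset_univ _)] at coeff
  simpa [MvPolynomial.coeff_sum, MvPolynomial.coeff_monomial, toFinsupp] using coeff

theorem sum_prod_copies_div_factorial [DecidableEq α] {K : Type*} [Field K] [CharZero K]
    (w : ι → ℕ → K) :
    (∑ f : α → ι, ∏ c, w c (copies f c)) / (Fintype.card α)! =
      ∑ k ∈ Finset.univ.piAntidiag (Fintype.card α), ∏ c, w c (k c) / (k c)! := by
  rw [← Finset.sum_fiberwise_of_maps_to' (t := Finset.univ.piAntidiag (Fintype.card α))
    (g := copies) (fun f _ => by simp [sum_copies]) (fun k => ∏ c, w c (k c)), Finset.sum_div]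
  refine Finset.sum_congr rfl fun k hk => ?_
  have hk : ∑ c, k c = Fintype.card α := by simpa using hk
  have spec : (∏ c, ((k c)! : K)) * Nat.multinomial Finset.univ k = (Fintype.card α)! := by
    exact_mod_cast hk ▸ Nat.multinomial_spec Finset.univ k
  have prod_ne_zero : ∏ c, ((k c)! : K) ≠ 0 :=
    Finset.prod_ne_zero_iff.2 fun c _ => Nat.cast_ne_zero.2 (k c).factorial_ne_zero
  have multinomial_ne_zero : (Nat.multinomial Finset.univ k : K) ≠ 0 :=
    Nat.cast_ne_zero.2 (Nat.multinomial_pos _ _).ne'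
  rw [Finset.sum_const, card_filter_copies_eq k hk, nsmul_eq_mul, Finset.prod_div_distrib, ← spec]
  field_simp

end Enumeration

section GeneratingFunction

theorem hasSum_prod_pi_fin_of_nonneg {κ : Type*} {n : ℕ} {w : Fin n → κ → ℝ} {g : Fin n → ℝ}
    (w_nonneg : ∀ c k, 0 ≤ w c k) (hw : ∀ c, HasSum (w c) (g c)) :
    HasSum (fun k : Fin n → κ => ∏ c, w c (k c)) (∏ c, g c) := by
  induction n with
  | zero => simp
  | succ n ih =>
    have hw_succ := ih (fun c => w_nonneg c.succ) fun c => hw c.succ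
    have summable := (hw 0).summable.mul_of_nonneg hw_succ.summable (w_nonneg 0)
      fun k => Finset.prod_nonneg fun c _ => w_nonneg c.succ (k c)
    rw [Fin.prod_univ_succ, ← (Fin.consEquiv fun _ => κ).hasSum_iff]
    simpa [Function.comp_def, Fin.prod_univ_succ] using (hw 0).mul hw_succ summable

theorem hasSum_prod_pi_of_nonneg {ι κ : Type*} [Fintype ι] {w : ι → κ → ℝ} {g : ι → ℝ}
    (w_nonneg : ∀ c k, 0 ≤ w c k) (hw : ∀ c, HasSum (w c) (g c)) :
    HasSum (fun k : ι → κ => ∏ c, w c (k c)) (∏ c, g c) := by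
  let e := (Fintype.equivFin ι).symm
  rw [← e.prod_comp, ← (e.arrowCongr (.refl κ)).hasSum_iff]
  simpa [Function.comp_def, ← e.prod_comp] using
    hasSum_prod_pi_fin_of_nonneg (fun c => w_nonneg (e c)) fun c => hw (e c)

variable {ι : Type*} [Fintype ι] [DecidableEq ι]

theorem hasSum_sum_prod_copies_div_factorial {w : ι → ℕ → ℝ} {g : ι → ℝ}
    (w_nonneg : ∀ c k, 0 ≤ w c k) (hw : ∀ c, HasSum (fun k => w c k / k !) (g c)) :
    HasSum (fun m => (∑ f : Fin m → ι, ∏ c, w c (copies f c)) / m !) (∏ c, g c) := by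
  have sum_all := hasSum_prod_pi_of_nonneg
    (fun c k => div_nonneg (w_nonneg c k) (Nat.cast_nonneg k !)) hw
  refine ((Equiv.sigmaFiberEquiv fun k : ι → ℕ => ∑ c, k c).hasSum_iff.2 sum_all).sigma fun m => ?_
  have := sum_prod_copies_div_factorial (α := Fin m) w
  rw [Fintype.card_fin] at this
  rw [this]
  have mem_iff (k : ι → ℕ) : k ∈ Finset.univ.piAntidiag m ↔ ∑ c, k c = m := by simp
  rw [← (Equiv.subtypeEquivRight mem_iff).hasSum_iff]
  exact Finset.hasSum _ fun k : ι → ℕ => ∏ c, w c (k c) / (k c)!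

theorem hasSum_card_copies_mul_pow_div_factorial {P : ι → ℕ → Prop} [∀ c, DecidablePred (P c)]
    {t : ℝ} (ht : 0 ≤ t) {g : ι → ℝ}
    (hP : ∀ c, HasSum (fun k => if P c k then t ^ k / k ! else 0) (g c)) :
    HasSum (fun m => #{f : Fin m → ι | ∀ c, P c (copies f c)} * (t ^ m / m !)) (∏ c, g c) := by
  have := hasSum_sum_prod_copies_div_factorial (w := fun c k => if P c k then t ^ k else 0)
    (fun c k => by positivity) (by simpa only [ite_div, zero_div] using hP)
  refine this.congr_fun fun m => ?_
  simp only [Finset.prod_ite_zero, Finset.mem_univ, true_implies, prod_pow_copies,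
    Finset.prod_const, Finset.card_univ, Fintype.card_fin, ← Finset.sum_filter, Finset.sum_const,
    nsmul_eq_mul, mul_div_assoc]

end GeneratingFunction

section LastDraw

/-- The tail `∑_{k ≥ n} t ^ k / k!` of the exponential series. -/
noncomputable def expTail (n : ℕ) (t : ℝ) : ℝ :=
  Real.exp t - ∑ k ∈ Finset.range n, t ^ k / k !

theorem hasSum_expTail (n : ℕ) (t : ℝ) :
    HasSum (fun k => if n ≤ k then t ^ k / k ! else 0) (expTail n t) := by
  have exp_series : HasSum (fun k : ℕ => t ^ k / k !) (Real.exp t) := by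
    simpa only [Real.exp_eq_exp_ℝ] using NormedSpace.expSeries_div_hasSum_exp t
  have head : HasSum (fun k : ℕ => if k < n then t ^ k / k ! else 0)
      (∑ k ∈ Finset.range n, t ^ k / k !) := by
    simpa [Finset.sum_ite_of_true] using hasSum_sum_of_ne_finset_zero
      (s := Finset.range n) (f := fun k : ℕ => if k < n then t ^ k / k ! else 0) (by simp_all)
  refine (exp_series.sub head).congr_fun fun k => ?_
  grind

theorem expTail_nonneg (n : ℕ) {t : ℝ} (ht : 0 ≤ t) : 0 ≤ expTail n t :=
  sub_nonneg.2 (Real.sum_le_exp_of_nonneg ht n)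

theorem expTail_pos (n : ℕ) {t : ℝ} (ht : 0 < t) : 0 < expTail n t := by
  have := Real.sum_le_exp_of_nonneg ht.le (n + 1)
  rw [Finset.sum_range_succ] at this
  have : 0 < t ^ n / n ! := by positivity
  unfold expTail
  linarith

theorem expTail_le_exp (n : ℕ) {t : ℝ} (ht : 0 ≤ t) : expTail n t ≤ Real.exp t :=
  sub_le_self _ (Finset.sum_nonneg fun _ _ => by positivity)

/-- The condition on the number `k` of copies of the kind `c'` among some draws which, imposed for
every `c'`, says that the draws contain `s + 1` copies of every kind except `c`, of which just one
copy is missing. -/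
abbrev OneCopyShort {ι : Type*} (s : ℕ) (c c' : ι) (k : ℕ) : Prop :=
  (c' = c → k = s) ∧ (c' ≠ c → s + 1 ≤ k)

variable {ι : Type*} [DecidableEq ι]

/-- The number of sequences of `m` draws that contain `s + 1` copies of every kind, except that
just one copy of `c` is missing: completion by one more draw means drawing `c`. -/
noncomputable def oneCopyShortCount (s : ℕ) (c : ι) (m : ℕ) : ℕ :=
  Nat.card {f : Fin m → ι // ∀ c', OneCopyShort s c c' (copies f c')}

theorem copies_snoc {m : ℕ} (f : Fin m → ι) (c c' : ι) :
    copies (Fin.snoc f c : Fin (m + 1) → ι) c' = copies f c' + if c = c' then 1 else 0 := by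
  simp only [copies, Finset.card_filter, Fin.sum_univ_castSucc, Fin.snoc_castSucc, Fin.snoc_last]

theorem card_filter_lt_snoc {m : ℕ} (f : Fin m → ι) (c c' : ι) :
    #{i : Fin (m + 1) | (i : ℕ) < m ∧ (Fin.snoc f c : Fin (m + 1) → ι) i = c'} = copies f c' := by
  simp only [copies, Finset.card_filter, Fin.sum_univ_castSucc, Fin.snoc_castSucc,
    Fin.val_castSucc, Fin.is_lt, Fin.val_last, lt_irrefl, true_and, false_and, if_false, add_zero]

theorem forall_oneCopyShort_iff (s : ℕ) (c : ι) (k : ι → ℕ) :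
    (∀ c', OneCopyShort s c c' (k c')) ↔
      (∀ c', s + 1 ≤ k c' + if c = c' then 1 else 0) ∧ ¬ ∀ c', s + 1 ≤ k c' := by
  constructor
  · intro short
    have := (short c).1 rfl
    exact ⟨by grind, fun complete => by grind⟩
  · rintro ⟨complete_snoc, not_complete⟩
    obtain ⟨a, ha⟩ := not_forall.1 not_complete
    have := complete_snoc a
    grind

theorem hasSum_oneCopyShortCount_mul_pow_div_factorial [Fintype ι] (s : ℕ) (c : ι) {t : ℝ}
    (ht : 0 ≤ t) :
    HasSum (fun m => oneCopyShortCount s c m * (t ^ m / m !))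
      (t ^ s / s ! * expTail (s + 1) t ^ (Fintype.card ι - 1)) := by
  have factor (c' : ι) : HasSum (fun k => if OneCopyShort s c c' k then t ^ k / k ! else 0)
      (if c' = c then t ^ s / s ! else expTail (s + 1) t) := by
    by_cases h : c' = c
    · simpa [OneCopyShort, h] using hasSum_single (f := fun k => if k = s then t ^ k / k ! else 0) s
        (by simp_all)
    · simpa [OneCopyShort, h] using hasSum_expTail (s + 1) t
  simp only [oneCopyShortCount, Nat.subtype_card _ fun _ => Finset.mem_filter_univ _]
  convert hasSum_card_copies_mul_pow_div_factorial ht factor using 1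
  rw [← Finset.mul_prod_erase _ _ (Finset.mem_univ c), if_pos rfl,
    Finset.prod_eq_pow_card fun c' hc' => if_neg (Finset.ne_of_mem_erase hc'),
    Finset.card_erase_of_mem (Finset.mem_univ c), Finset.card_univ]

/-- `stopProb` for a collector who waits for at least `r` copies of every kind. -/
noncomputable def stopProbAtLeast (r d n : ℕ) : ℝ :=
  (Nat.card {f : Fin n → Fin d //
    (∀ c, r ≤ copies f c) ∧ ¬ ∀ c, r ≤ #{i : Fin n | (i : ℕ) < n - 1 ∧ f i = c}} : ℝ) / (d : ℝ) ^ n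

theorem stopProb_eq_stopProbAtLeast_two : stopProb = stopProbAtLeast 2 := rfl

theorem stopProbAtLeast_succ (s d m : ℕ) :
    stopProbAtLeast (s + 1) d (m + 1) =
      (∑ c : Fin d, oneCopyShortCount s c m : ℕ) / (d : ℝ) ^ (m + 1) := by
  rw [stopProbAtLeast]
  congr 2
  simp only [oneCopyShortCount, ← Nat.card_sigma]
  refine (Nat.card_congr ?_).symm.trans (Nat.card_congr (Equiv.subtypeProdEquivSigmaSubtype
    fun c (f : Fin m → Fin d) => ∀ c', OneCopyShort s c c' (copies f c')))
  refine (Fin.snocEquiv fun _ => Fin d).subtypeEquiv fun ⟨c, f⟩ => ?_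
  rw [show Fin.snocEquiv (fun _ => Fin d) (c, f) = (Fin.snoc f c : Fin (m + 1) → Fin d) from rfl]
  simp only [copies_snoc, Nat.add_sub_cancel, card_filter_lt_snoc]
  exact forall_oneCopyShort_iff s c (copies f)

end LastDraw

section Laplace

theorem integrableOn_pow_mul_exp_neg_mul_Ioi (n : ℕ) {r : ℝ} (hr : 0 < r) :
    IntegrableOn (fun t : ℝ => t ^ n * Real.exp (-(r * t))) (Set.Ioi 0) := by
  simpa using integrableOn_rpow_mul_exp_neg_mul_rpow (s := n) (p := 1)
    (by linarith [n.cast_nonneg (α := ℝ)]) one_pos hr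

theorem integral_pow_mul_exp_neg_mul_Ioi (n : ℕ) {r : ℝ} (hr : 0 < r) :
    ∫ t in Set.Ioi (0 : ℝ), t ^ n * Real.exp (-(r * t)) = n ! / r ^ (n + 1) := by
  have := Real.integral_rpow_mul_exp_neg_mul_Ioi (a := n + 1) (by positivity) hr
  rw [Real.Gamma_nat_eq_factorial, ← Nat.cast_succ, Real.rpow_natCast] at this
  simpa [div_eq_inv_mul] using this

theorem hasSum_integral_pow_mul_exp_neg_mul {a : ℕ → ℝ} (a_nonneg : ∀ m, 0 ≤ a m) {g : ℝ → ℝ}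
    {r : ℝ} (hr : 0 < r) (p : ℕ)
    (hg : ∀ t ∈ Set.Ioi (0 : ℝ), HasSum (fun m => a m * (t ^ m / m !)) (g t))
    (integrable : IntegrableOn (fun t => t ^ p * Real.exp (-(r * t)) * g t) (Set.Ioi 0)) :
    HasSum (fun m => a m * ((m + p)! / m ! / r ^ (m + p + 1)))
      (∫ t in Set.Ioi (0 : ℝ), t ^ p * Real.exp (-(r * t)) * g t) := by
  let F (m : ℕ) (t : ℝ) : ℝ := a m / m ! * (t ^ (m + p) * Real.exp (-(r * t)))
  have hasSum_F (t : ℝ) (ht : t ∈ Set.Ioi 0) :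
      HasSum (F · t) (t ^ p * Real.exp (-(r * t)) * g t) := by
    refine ((hg t ht).mul_left _).congr_fun fun m => ?_
    simp only [F]
    ring
  have ae_hasSum_F := ae_restrict_of_forall_mem measurableSet_Ioi hasSum_F (μ := volume)
  have integral_F (m : ℕ) :
      ∫ t in Set.Ioi (0 : ℝ), F m t = a m * ((m + p)! / m ! / r ^ (m + p + 1)) := by
    rw [integral_const_mul, integral_pow_mul_exp_neg_mul_Ioi _ hr]
    ring
  simp only [← integral_F]
  refine hasSum_integral_of_dominated_convergence F (fun m => ?_) (fun m => ?_)
    (ae_hasSum_F.mono fun t h => h.summable) ?_ ae_hasSum_F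
  · exact ((integrableOn_pow_mul_exp_neg_mul_Ioi _ hr).const_mul _).aestronglyMeasurable
  · refine ae_restrict_of_forall_mem measurableSet_Ioi fun t (ht : 0 < t) => ?_
    have := a_nonneg m
    exact (Real.norm_of_nonneg (by positivity)).le
  · exact integrable.congr (ae_hasSum_F.mono fun t h => h.tsum_eq.symm)

end Laplace

section ExpectedTime

theorem integrand_eq_mul_exp_neg_mul (s : ℕ) {d : ℕ} (hd : 1 ≤ d) {t : ℝ} (ht : 0 < t) :
    t ^ (s + 1) / s ! / expTail (s + 1) t *
        (1 - (∑ k ∈ Finset.range (s + 1), t ^ k / k !) * Real.exp (-t)) ^ d =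
      t * Real.exp (-(d * t)) * (t ^ s / s ! * expTail (s + 1) t ^ (d - 1)) := by
  have tail_mul_exp_neg : 1 - (∑ k ∈ Finset.range (s + 1), t ^ k / k !) * Real.exp (-t) =
      expTail (s + 1) t * Real.exp (-t) := by
    rw [expTail, sub_mul, ← Real.exp_add, add_neg_cancel, Real.exp_zero]
  have := (expTail_pos (s + 1) ht).ne'
  obtain ⟨e, rfl⟩ := Nat.exists_eq_add_of_le' hd
  rw [tail_mul_exp_neg, mul_pow, ← Real.exp_nat_mul, mul_neg, Nat.add_sub_cancel]
  field_simp
  ring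

theorem integrableOn_mul_exp_neg_mul_expTail_pow (s : ℕ) {d : ℕ} (hd : 1 ≤ d) :
    IntegrableOn (fun t : ℝ =>
      t * Real.exp (-(d * t)) * (t ^ s / s ! * expTail (s + 1) t ^ (d - 1))) (Set.Ioi 0) := by
  have dominating := (integrableOn_pow_mul_exp_neg_mul_Ioi (s + 1) one_pos).const_mul (1 / s ! : ℝ)
  refine dominating.mono' (by unfold expTail; fun_prop)
    (ae_restrict_of_forall_mem measurableSet_Ioi fun t (ht : 0 < t) => ?_)
  have tail_nonneg := expTail_nonneg (s + 1) ht.le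
  obtain ⟨e, rfl⟩ := Nat.exists_eq_add_of_le' hd
  rw [Real.norm_of_nonneg (by positivity), Nat.add_sub_cancel]
  calc t * Real.exp (-((e + 1 : ℕ) * t)) * (t ^ s / s ! * expTail (s + 1) t ^ e)
      ≤ t * Real.exp (-((e + 1 : ℕ) * t)) * (t ^ s / s ! * Real.exp t ^ e) := by
        gcongr
        exact expTail_le_exp (s + 1) ht.le
    _ = 1 / s ! * (t ^ (s + 1) * (Real.exp (-((e + 1 : ℕ) * t)) * Real.exp (e * t))) := by
        rw [Real.exp_nat_mul]
        ring
    _ = 1 / s ! * (t ^ (s + 1) * Real.exp (-(1 * t))) := by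
        rw [← Real.exp_add]
        push_cast
        ring_nf

theorem hasSum_oneCopyShortCount_mul_succ_div_pow {ι : Type*} [Fintype ι] [DecidableEq ι]
    (s : ℕ) (c : ι) :
    HasSum (fun m => oneCopyShortCount s c m * ((m + 1) / (Fintype.card ι : ℝ) ^ (m + 2)))
      (∫ t in Set.Ioi (0 : ℝ), t ^ (s + 1) / s ! / expTail (s + 1) t *
        (1 - (∑ k ∈ Finset.range (s + 1), t ^ k / k !) * Real.exp (-t)) ^ Fintype.card ι) := by
  have card_pos : 0 < Fintype.card ι := Fintype.card_pos_iff.2 ⟨c⟩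
  rw [setIntegral_congr_fun measurableSet_Ioi
    fun t ht => integrand_eq_mul_exp_neg_mul s card_pos ht]
  have laplace := hasSum_integral_pow_mul_exp_neg_mul (fun m => Nat.cast_nonneg _)
    (Nat.cast_pos.2 card_pos) 1
    (fun t ht => hasSum_oneCopyShortCount_mul_pow_div_factorial s c (le_of_lt ht))
    (by simpa only [pow_one] using integrableOn_mul_exp_neg_mul_expTail_pow s card_pos)
  simp only [pow_one] at laplace
  refine laplace.congr_fun fun m => ?_
  rw [Nat.factorial_succ]
  push_cast
  field_simp

theorem expected_time_two_copies_integral_general (s d : ℕ) (hd : 1 ≤ d) :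
    HasSum (fun n : ℕ => n * stopProbAtLeast (s + 1) d n)
      ((d : ℝ) ^ 2 * ∫ t in Set.Ioi (0 : ℝ), t ^ (s + 1) / s ! / expTail (s + 1) t *
        (1 - (∑ k ∈ Finset.range (s + 1), t ^ k / k !) * Real.exp (-t)) ^ d) := by
  have last_draw (c : Fin d) := hasSum_oneCopyShortCount_mul_succ_div_pow s c
  simp only [Fintype.card_fin] at last_draw
  have any_last_draw := (hasSum_sum fun c (_ : c ∈ Finset.univ) => last_draw c).mul_left (d : ℝ)
  rw [Finset.sum_const, Finset.card_univ, Fintype.card_fin, nsmul_eq_mul, ← mul_assoc, ← pow_two]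
    at any_last_draw
  rw [← hasSum_nat_add_iff' 1, Finset.sum_range_one, Nat.cast_zero, zero_mul, sub_zero]
  refine any_last_draw.congr_fun fun m => ?_
  have d_ne_zero : (d : ℝ) ≠ 0 := Nat.cast_ne_zero.2 (Nat.one_le_iff_ne_zero.1 hd)
  rw [stopProbAtLeast_succ, ← Finset.sum_mul, mul_left_comm, pow_succ' (d : ℝ) (m + 1),
    ← mul_div_assoc (d : ℝ), mul_div_mul_left _ _ d_ne_zero]
  push_cast
  ring

end ExpectedTime

/-- The expected number of draws to collect at least two copies of each of `d` kinds:
`⟨T⟩₂ = d² ∫_0^∞ (t²/(e^t - 1 - t)) (1 - (1+t)e^{-t})^d dt`. -/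
theorem expected_time_two_copies_integral (d : ℕ) (hd : 1 ≤ d) :
    ∑' n : ℕ, (n : ℝ) * stopProb d n
      = (d : ℝ) ^ 2 * ∫ t in Set.Ioi (0 : ℝ),
          t ^ 2 / (Real.exp t - 1 - t) * (1 - (1 + t) * Real.exp (-t)) ^ d := by
  simpa [stopProb_eq_stopProbAtLeast_two, expTail, Finset.sum_range_succ, sub_sub] using
    (expected_time_two_copies_integral_general 1 d hd).tsum_eq
end

section
/- The expected number of draws to collect at least two copies of each of d coupon kinds equals d² Σ_{m=0}^{d-1} Σ_{j=0}^{m} (-1)^m C(d-1,m) C(m,j) (j+2)!/(m+1)^{j+3}. -/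
/-!
A word of length `n + 1` stops the collector exactly when its last letter `a` occurs once among the
first `n` letters and every other letter occurs at least twice there. Exponential generating
functions count these words: the stopping probability at trial `n + 1` is
`n! [Xⁿ] X (exp X - 1 - X)ᵈ⁻¹ / dⁿ`. Expanding the power by the binomial theorem leaves the series
`X ^ (j + 1) exp ((d - 1 - m) X)`, and the weighted sum `∑ (n + 1)! [Xⁿ] (·) / dⁿ` of such a series
is a derivative of the geometric series.
-/

section Words

open Finset

theorem sum_fin_succ_arrow {ι M : Type*} [Fintype ι] [AddCommMonoid M] {n : ℕ}
    (F : (Fin (n + 1) → ι) → M) :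
    ∑ f, F f = ∑ a : ι, ∑ g : Fin n → ι, F (Fin.snoc (α := fun _ ↦ ι) g a) := by
  rw [← (Fin.snocEquiv fun _ ↦ ι).sum_comp, Fintype.sum_prod_type]
  rfl

variable {ι : Type*} [DecidableEq ι] {n : ℕ}

theorem card_filter_snoc_eq (g : Fin n → ι) (a c : ι) :
    #{i | Fin.snoc (α := fun _ ↦ ι) g a i = c} = #{i | g i = c} + if a = c then 1 else 0 := by
  simp only [card_filter, Fin.sum_univ_castSucc, Fin.snoc_castSucc, Fin.snoc_last]

theorem card_filter_lt_and_eq (f : Fin (n + 1) → ι) (c : ι) :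
    #{i : Fin (n + 1) | (i : ℕ) < n ∧ f i = c} = #{i | Fin.init f i = c} := by
  change _ = #{i : Fin n | f i.castSucc = c}
  simp only [card_filter, Fin.sum_univ_castSucc, Fin.val_castSucc, Fin.is_lt, true_and,
    Fin.val_last, lt_irrefl, false_and, if_false, add_zero]

/-- The word `f` shows every letter of the alphabet `ι` at least `r` times: the collection drawn
in the order `f` contains `r` copies of every kind. -/
def HasCopies (r : ℕ) (f : Fin n → ι) : Prop :=
  ∀ c, r ≤ #{i | f i = c}

instance [Fintype ι] (r : ℕ) : DecidablePred (HasCopies r : (Fin n → ι) → Prop) :=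
  fun f ↦ inferInstanceAs (Decidable (∀ c, r ≤ #{i | f i = c}))

theorem forall_succ_le_add_ite_and_not_forall_iff (r : ℕ) (k : ι → ℕ) (a : ι) :
    ((∀ c, r + 1 ≤ k c + if a = c then 1 else 0) ∧ ¬ ∀ c, r + 1 ≤ k c) ↔
      ∀ c, if c = a then k c = r else r + 1 ≤ k c := by
  constructor
  · rintro ⟨hadd, hnot⟩ c
    obtain ⟨b, hb⟩ := not_forall.mp hnot
    have hab : a = b := by
      by_contra hne
      exact hb (by simpa only [if_neg hne, add_zero] using hadd b)
    grind
  · intro h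
    exact ⟨fun c ↦ by grind, fun hk ↦ by grind [h a]⟩

theorem hasCopies_snoc_and_not_hasCopies_iff (r : ℕ) (g : Fin n → ι) (a : ι) :
    HasCopies (r + 1) (Fin.snoc (α := fun _ ↦ ι) g a) ∧ ¬ HasCopies (r + 1) g ↔
      ∀ c, if c = a then #{i | g i = c} = r else r + 1 ≤ #{i | g i = c} := by
  simp only [HasCopies, card_filter_snoc_eq]
  exact forall_succ_le_add_ite_and_not_forall_iff r _ a

theorem card_hasCopies_and_not_hasCopies_init [Fintype ι] (r : ℕ) :
    #{f : Fin (n + 1) → ι | HasCopies (r + 1) f ∧ ¬ HasCopies (r + 1) (Fin.init f)} =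
      ∑ a : ι, #{g : Fin n → ι |
        ∀ c, if c = a then #{i | g i = c} = r else r + 1 ≤ #{i | g i = c}} := by
  simp only [card_filter, sum_fin_succ_arrow, Fin.init_snoc]
  simp only [← card_filter, hasCopies_snoc_and_not_hasCopies_iff]

end Words

theorem stopProb_succ (d n : ℕ) :
    stopProb d (n + 1) =
      (Finset.univ.filter fun f : Fin (n + 1) → Fin d ↦
        HasCopies 2 f ∧ ¬ HasCopies 2 (Fin.init f)).card / (d : ℝ) ^ (n + 1) := by
  rw [stopProb, Nat.subtype_card _ fun f ↦ ?_]
  rw [Finset.mem_filter_univ]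
  simp only [HasCopies, Nat.add_sub_cancel, card_filter_lt_and_eq]

theorem derivation_finset_prod {R A M ι : Type*} [CommSemiring R] [CommSemiring A]
    [AddCommMonoid M] [Algebra R A] [Module A M] [Module R M] [DecidableEq ι]
    (D : Derivation R A M) (s : Finset ι) (f : ι → A) :
    D (∏ i ∈ s, f i) = ∑ a ∈ s, (∏ i ∈ s.erase a, f i) • D (f a) := by
  induction s using Finset.induction_on with
  | empty => simp
  | insert b s hb ih =>
    rw [Finset.prod_insert hb, D.leibniz, ih, Finset.sum_insert hb, Finset.erase_insert hb,
      add_comm, Finset.smul_sum]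
    congr 1
    refine Finset.sum_congr rfl fun a ha ↦ ?_
    have hba : b ≠ a := fun h ↦ hb (h ▸ ha)
    rw [Finset.erase_insert_of_ne hba, Finset.prod_insert (by simp [hb]), mul_smul]

section ExponentialGeneratingFunction

open Finset PowerSeries
open scoped Nat

variable {K : Type*} [Field K]

/-- The exponential generating function `∑ w k X ^ k / k!` of the sequence `w`. -/
def egf (w : ℕ → K) : K⟦X⟧ :=
  .mk fun k ↦ w k / k !

theorem egf_ite_eq (r : ℕ) :
    egf (fun k ↦ if k = r then (1 : K) else 0) = C (1 / (r ! : K)) * X ^ r := by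
  ext k
  rw [egf, coeff_mk, coeff_C_mul_X_pow]
  split_ifs with h <;> simp [h]

variable [CharZero K]

theorem derivative_egf (w : ℕ → K) : d⁄dX K (egf w) = egf fun k ↦ w (k + 1) := by
  ext k
  simp only [egf, coeff_derivative, coeff_mk, Nat.factorial_succ]
  push_cast
  field_simp

theorem egf_ite_le (r : ℕ) :
    egf (fun k ↦ if r ≤ k then (1 : K) else 0) = exp K - (trunc r (exp K) : K⟦X⟧) := by
  ext k
  rw [egf, coeff_mk, map_sub, Polynomial.coeff_coe, coeff_trunc]
  split_ifs with hle hlt hlt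
  · omega
  · simp [coeff_exp]
  · simp
  · omega

variable {ι : Type*} [Fintype ι] [DecidableEq ι]

theorem derivative_prod_egf (w : ι → ℕ → K) :
    d⁄dX K (∏ c, egf (w c)) =
      ∑ a, ∏ c, egf (Function.update w a (fun k ↦ w a (k + 1)) c) := by
  rw [derivation_finset_prod]
  refine sum_congr rfl fun a _ ↦ ?_
  rw [derivative_egf, smul_eq_mul, mul_comm, ← mul_prod_erase univ _ (mem_univ a),
    Function.update_self]
  congr 1
  refine prod_congr rfl fun c hc ↦ ?_
  rw [Function.update_of_ne (ne_of_mem_erase hc)]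

theorem sum_prod_card_filter_eq (n : ℕ) (w : ι → ℕ → K) :
    ∑ f : Fin n → ι, ∏ c, w c #{i | f i = c} = n ! * coeff n (∏ c, egf (w c)) := by
  induction n generalizing w with
  | zero =>
    simp [egf, coeff_zero_eq_constantCoeff, map_prod, ← coeff_zero_eq_constantCoeff_apply]
  | succ n ih =>
    -- Appending the letter `a` to a word shifts the weight of `a` only, and summing the shifted
    -- products over `a` differentiates the product of the generating functions.
    have hshift (a : ι) (g : Fin n → ι) :
        ∏ c, w c (#{i | g i = c} + if a = c then 1 else 0) =
          ∏ c, Function.update w a (fun k ↦ w a (k + 1)) c #{i | g i = c} := by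
      refine prod_congr rfl fun c _ ↦ ?_
      rcases eq_or_ne c a with rfl | hca
      · simp
      · simp [hca, hca.symm]
    calc ∑ f : Fin (n + 1) → ι, ∏ c, w c #{i | f i = c}
      _ = n ! * coeff n (d⁄dX K (∏ c, egf (w c))) := by
        simp only [sum_fin_succ_arrow, card_filter_snoc_eq, hshift, ih, ← mul_sum, ← map_sum,
          derivative_prod_egf]
      _ = (n + 1)! * coeff (n + 1) (∏ c, egf (w c)) := by
        rw [coeff_derivative, Nat.factorial_succ]
        push_cast
        ring

theorem card_filter_forall_card_filter_eq (n : ℕ) (P : ι → ℕ → Prop)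
    [∀ c, DecidablePred (P c)] :
    (#{f : Fin n → ι | ∀ c, P c #{i | f i = c}} : K) =
      n ! * coeff n (∏ c, egf fun k ↦ if P c k then (1 : K) else 0) := by
  simp [← sum_prod_card_filter_eq, prod_ite_zero]

theorem card_hasCopies_and_not_hasCopies_init_eq_coeff (r n : ℕ) :
    (#{f : Fin (n + 1) → ι | HasCopies (r + 1) f ∧ ¬ HasCopies (r + 1) (Fin.init f)} : K) =
      Fintype.card ι * (n ! * coeff n (C (1 / (r ! : K)) * X ^ r *
        (exp K - (trunc (r + 1) (exp K) : K⟦X⟧)) ^ (Fintype.card ι - 1))) := by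
  have hprod (a : ι) :
      ∏ c, egf (fun k ↦ if (if c = a then k = r else r + 1 ≤ k) then (1 : K) else 0) =
        C (1 / (r ! : K)) * X ^ r *
          (exp K - (trunc (r + 1) (exp K) : K⟦X⟧)) ^ (Fintype.card ι - 1) := by
    rw [← mul_prod_erase univ _ (mem_univ a)]
    congr 1
    · simp only [if_true, egf_ite_eq]
    · rw [← card_univ, ← card_erase_of_mem (mem_univ a)]
      refine prod_eq_pow_card fun c hc ↦ ?_
      simp only [ne_of_mem_erase hc, if_false, egf_ite_le]
  rw [card_hasCopies_and_not_hasCopies_init, Nat.cast_sum]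
  refine (sum_congr rfl fun a _ ↦ card_filter_forall_card_filter_eq n
    fun c k ↦ if c = a then k = r else r + 1 ≤ k).trans ?_
  simp only [hprod, sum_const, card_univ, nsmul_eq_mul]

end ExponentialGeneratingFunction

open PowerSeries in
open scoped Nat in
theorem stopProb_succ_succ_eq_coeff (d n : ℕ) :
    stopProb (d + 1) (n + 1) =
      n ! * coeff n ((X : ℝ⟦X⟧) * (exp ℝ - 1 - X) ^ d) / ((d : ℝ) + 1) ^ n := by
  have htrunc : (trunc 2 (exp ℝ) : ℝ⟦X⟧) = 1 + X := by
    simp [trunc_succ, Polynomial.monomial_one_one_eq_X, coeff_exp]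
  have hd : (d : ℝ) + 1 ≠ 0 := by positivity
  rw [stopProb_succ, card_hasCopies_and_not_hasCopies_init_eq_coeff 1 n, htrunc,
    Fintype.card_fin, Nat.add_sub_cancel, pow_one, pow_succ]
  simp only [Nat.factorial_one, Nat.cast_one, div_one, map_one, one_mul, ← sub_sub,
    Nat.cast_add]
  field_simp

theorem sub_one_sub_pow {R : Type*} [CommRing R] (a b : R) (d : ℕ) :
    (a - 1 - b) ^ d = ∑ m ∈ Finset.range (d + 1), ∑ j ∈ Finset.range (m + 1),
      ((-1) ^ m * d.choose m * m.choose j : ℤ) • (b ^ j * a ^ (d - m)) := by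
  rw [show a - 1 - b = -(b + 1) + a by ring, add_pow]
  refine Finset.sum_congr rfl fun m _ ↦ ?_
  rw [neg_pow, add_pow, Finset.mul_sum, Finset.sum_mul, Finset.sum_mul]
  refine Finset.sum_congr rfl fun j _ ↦ ?_
  simp only [zsmul_eq_mul, one_pow]
  push_cast
  ring

section Laplace

open PowerSeries
open scoped Nat

theorem factorial_succ_mul_coeff_X_pow_mul_rescale_exp {K : Type*} [Field K] [CharZero K]
    (k n : ℕ) (q : K) :
    ((n + k + 1)! : K) * coeff (n + k) (X ^ k * rescale q (exp K)) =
      (k + 1)! * ((n + (k + 1)).choose (k + 1) * q ^ n) := by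
  have hchoose : ((n + (k + 1)).choose (k + 1) : K) * n ! * (k + 1)! = (n + k + 1)! := by
    exact_mod_cast Nat.add_choose_mul_factorial_mul_factorial n (k + 1)
  have hn : (n ! : K) ≠ 0 := Nat.cast_ne_zero.mpr n.factorial_ne_zero
  rw [coeff_X_pow_mul, coeff_rescale, coeff_exp, ← hchoose, map_div₀, map_one, map_natCast]
  field_simp

/-- Up to the factor `s ^ 2`, the Laplace transform of `x ^ (k + 1) * exp (q * x)` at `s`. -/
theorem hasSum_factorial_succ_mul_coeff_X_pow_mul_rescale_exp_div_pow {𝕜 : Type*}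
    [NormedField 𝕜] [CharZero 𝕜] (k : ℕ) {q s : 𝕜} (hqs : ‖q‖ < ‖s‖) :
    HasSum (fun n : ℕ ↦ ((n + 1)! : 𝕜) * coeff n (X ^ k * rescale q (exp 𝕜)) / s ^ n)
      ((k + 1)! * s ^ 2 / (s - q) ^ (k + 2)) := by
  have hs : s ≠ 0 := norm_pos_iff.mp ((norm_nonneg q).trans_lt hqs)
  have hsq : s - q ≠ 0 := sub_ne_zero.mpr fun h ↦ hqs.ne (by rw [h])
  have hratio : ‖q / s‖ < 1 := by rwa [norm_div, div_lt_one (norm_pos_iff.mpr hs)]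
  have hgeom := (hasSum_choose_mul_geometric_of_norm_lt_one (k + 1) hratio).mul_left
    (((k + 1)! : 𝕜) / s ^ k)
  rw [← hasSum_nat_add_iff' k, Finset.sum_eq_zero, sub_zero]
  · convert! hgeom using 1
    · ext n
      rw [factorial_succ_mul_coeff_X_pow_mul_rescale_exp, div_pow, pow_add]
      field_simp
    · rw [one_sub_div hs, div_pow]
      field_simp
      ring
  · intro n hn
    rw [coeff_X_pow_mul', if_neg (by simpa using hn), mul_zero, zero_div]

end Laplace

open PowerSeries in
open scoped Nat in
theorem hasSum_succ_mul_stopProb_succ (d : ℕ) :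
    HasSum (fun n : ℕ ↦ ((n : ℝ) + 1) * stopProb (d + 1) (n + 1))
      (∑ m ∈ Finset.range (d + 1), ∑ j ∈ Finset.range (m + 1),
        ((-1) ^ m * d.choose m * m.choose j : ℤ) *
          ((j + 2)! * ((d : ℝ) + 1) ^ 2 / ((m : ℝ) + 1) ^ (j + 3))) := by
  have hseries : (X : ℝ⟦X⟧) * (exp ℝ - 1 - X) ^ d =
      ∑ m ∈ Finset.range (d + 1), ∑ j ∈ Finset.range (m + 1),
        ((-1) ^ m * d.choose m * m.choose j : ℤ) •
          (X ^ (j + 1) * rescale ((d - m : ℕ) : ℝ) (exp ℝ)) := by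
    simp only [sub_one_sub_pow, Finset.mul_sum, mul_smul_comm, ← mul_assoc, ← pow_succ',
      exp_pow_eq_rescale_exp]
  have hterm {m : ℕ} (hm : m ∈ Finset.range (d + 1)) (j : ℕ) :
      HasSum (fun n : ℕ ↦ ((n + 1)! : ℝ) *
          coeff n (X ^ (j + 1) * rescale ((d - m : ℕ) : ℝ) (exp ℝ)) / ((d : ℝ) + 1) ^ n)
        ((j + 2)! * ((d : ℝ) + 1) ^ 2 / ((m : ℝ) + 1) ^ (j + 3)) := by
    have hmd : m ≤ d := Nat.lt_succ_iff.mp (Finset.mem_range.mp hm)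
    have hlt : ‖((d - m : ℕ) : ℝ)‖ < ‖(d : ℝ) + 1‖ := by
      rw [Real.norm_natCast, Real.norm_of_nonneg (by positivity)]
      exact_mod_cast Nat.lt_succ_of_le (Nat.sub_le d m)
    have hsub : (d : ℝ) + 1 - (d - m : ℕ) = m + 1 := by
      rw [Nat.cast_sub hmd]
      ring
    simpa only [hsub] using
      hasSum_factorial_succ_mul_coeff_X_pow_mul_rescale_exp_div_pow (j + 1) hlt
  convert! hasSum_sum fun m hm ↦ hasSum_sum fun j (_ : j ∈ Finset.range (m + 1)) ↦
    (hterm hm j).mul_left (((-1) ^ m * d.choose m * m.choose j : ℤ) : ℝ) using 1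
  ext n
  rw [stopProb_succ_succ_eq_coeff, hseries, Nat.factorial_succ]
  simp only [map_sum, map_zsmul, Finset.mul_sum, Finset.sum_div]
  refine Finset.sum_congr rfl fun m _ ↦ Finset.sum_congr rfl fun j _ ↦ ?_
  rw [zsmul_eq_mul]
  push_cast
  ring

/-- The expected number of draws to collect at least two copies of each of `d` kinds:
`⟨T⟩₂ = d² Σ_{m=0}^{d-1} Σ_{j=0}^{m} (-1)^m C(d-1,m) C(m,j) (j+2)!/(m+1)^{j+3}`. -/
theorem expected_time_two_copies_sum (d : ℕ) (hd : 1 ≤ d) :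
    ∑' n : ℕ, (n : ℝ) * stopProb d n
      = (d : ℝ) ^ 2 * ∑ m ∈ Finset.range d, ∑ j ∈ Finset.range (m + 1),
          (-1 : ℝ) ^ m * (Nat.choose (d - 1) m : ℝ) * (Nat.choose m j : ℝ) *
            (Nat.factorial (j + 2) : ℝ) / ((m : ℝ) + 1) ^ (j + 3) := by
  obtain ⟨d, rfl⟩ := Nat.exists_eq_add_of_le' hd
  refine HasSum.tsum_eq ?_
  rw [← hasSum_nat_add_iff' 1]
  simp only [Finset.sum_range_one, Nat.cast_zero, zero_mul, sub_zero, Nat.add_sub_cancel]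
  convert! hasSum_succ_mul_stopProb_succ d using 1
  · simp only [Nat.cast_add, Nat.cast_one]
  · simp only [Finset.mul_sum]
    refine Finset.sum_congr rfl fun m _ ↦ Finset.sum_congr rfl fun j _ ↦ ?_
    push_cast
    ring
end
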